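/- There exists a constant C, independent of m, with the following property: for every integer m ≥ 1 and all axially symmetric functions u, ω, with u twice and ω once continuously differentiable on a neighborhood of the closure of D_m, satisfying ∂_r² u + (1/r) ∂_r u + ∂_{x₃}² u − u/r² = ∂_{x₃} ω in D_m, ∂_{x₃} u = 0 on ∂^H D_m, and u = 0 on ∂^V D_m, one has sup_{D_m} |u| ≤ C ( sup_{D_m} |ω| + 1 )^{13/3} ( ∫_{D_m} ( |u| + 1 )² dx )^{1/2}. -/

import Mathlib

noncomputable section

open Real MeasureTheory Set

/-- Inner radius of the `j`-th rectangle: `r_j = 2^(-j)`. -/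
def rW (j : ℕ) : ℝ := (2 : ℝ) ^ (-(j : ℝ))

/-- Height of the `j`-th rectangle: `h_j = 2^(-β (j-1))`. -/
def hH (β : ℝ) (j : ℕ) : ℝ := (2 : ℝ) ^ (-β * ((j : ℝ) - 1))

/-- The rectangle `S_j` in the `(r, x₃)` cross-section. -/
def Srect (β : ℝ) (j : ℕ) : Set (ℝ × ℝ) :=
  {p : ℝ × ℝ | rW j ≤ p.1 ∧ p.1 < rW (j - 1) ∧ 0 < p.2 ∧ p.2 < hH β j}

/-- The `(r, x₃)` cross-section of the domain `D_m`. -/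
def Ddom (β : ℝ) (m : ℕ) : Set (ℝ × ℝ) := ⋃ j ∈ Finset.Icc 1 m, Srect β j

/-- The horizontal part `∂^H D_m` of the boundary of `D_m` (where `x₃` is locally constant). -/
def bdH (β : ℝ) (m : ℕ) : Set (ℝ × ℝ) :=
  {p : ℝ × ℝ | p.2 = 0 ∧ rW m ≤ p.1 ∧ p.1 ≤ 1} ∪
    ⋃ j ∈ Finset.Icc 1 m,
      {p : ℝ × ℝ | p.2 = hH β j ∧ rW j ≤ p.1 ∧ p.1 ≤ rW (j - 1)}

/-- The vertical part `∂^V D_m` of the boundary of `D_m` (where `r` is locally constant). -/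
def bdV (β : ℝ) (m : ℕ) : Set (ℝ × ℝ) :=
  {p : ℝ × ℝ | p.1 = 1 ∧ 0 ≤ p.2 ∧ p.2 ≤ 1} ∪
    {p : ℝ × ℝ | p.1 = rW m ∧ 0 ≤ p.2 ∧ p.2 ≤ hH β m} ∪
    ⋃ j ∈ Finset.Icc 1 (m - 1),
      {p : ℝ × ℝ | p.1 = rW j ∧ hH β (j + 1) ≤ p.2 ∧ p.2 ≤ hH β j}

/-- The full boundary `∂ D_m` of `D_m`. -/
def bdD (β : ℝ) (m : ℕ) : Set (ℝ × ℝ) := bdH β m ∪ bdV β m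

/-- The corner points of the polygonal cross-section of `D_m`
(i.e. the corner circles of the 3D domain). -/
def cornerSet (β : ℝ) (m : ℕ) : Set (ℝ × ℝ) :=
  ({(rW m, 0), ((1 : ℝ), 0), ((1 : ℝ), (1 : ℝ)), (rW m, hH β m)} : Set (ℝ × ℝ)) ∪
    ⋃ j ∈ Finset.Icc 1 (m - 1),
      ({(rW j, hH β j), (rW j, hH β (j + 1))} : Set (ℝ × ℝ))

/-- Radial partial derivative `∂_r`. -/
def pdr (F : ℝ × ℝ → ℝ) (p : ℝ × ℝ) : ℝ := deriv (fun r => F (r, p.2)) p.1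

/-- Vertical partial derivative `∂_{x₃}`. -/
def pdz (F : ℝ × ℝ → ℝ) (p : ℝ × ℝ) : ℝ := deriv (fun z => F (p.1, z)) p.2

/-- The axially symmetric Laplacian `Δ = ∂_r² + (1/r) ∂_r + ∂_{x₃}²`. -/
def cylLap (F : ℝ × ℝ → ℝ) (p : ℝ × ℝ) : ℝ :=
  pdr (pdr F) p + (1 / p.1) * pdr F p + pdz (pdz F) p

/-- The integral of an axially symmetric function over the 3-dimensional domain `D_m`,
computed in the cross-section: `∫_{D_m} f dx = 2π ∬ F r dr dx₃`. -/
def cylIntegral (β : ℝ) (m : ℕ) (F : ℝ × ℝ → ℝ) : ℝ :=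
  ∫ p in Ddom β m, F p * (2 * π * p.1)

/-- The vertical cross-section segment `D_m ∩ {r = c}` of the cross-section. -/
def vertSeg (β : ℝ) (m : ℕ) (c : ℝ) : Set ℝ := {z : ℝ | (c, z) ∈ Ddom β m}

/-!
De Giorgi iteration on the levels of `u`. Testing the equation with `(u - k)₊²` gives an energy
estimate whose only boundary term comes from `ω` on the horizontal boundary. The one-dimensional
trace inequality in the columns of `D` bounds it, with a constant independent of the shape of `D`
because the column at radius `r` is at least `r ^ 2` long, and for `k ≥ 4 sup |ω|` the zeroth-order
term `u / r ^ 2` absorbs the result. Bounding `r (u - k)₊²` pointwise both by an integral over the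
row, at whose ends `u` vanishes, and by an integral over the column, then multiplying the two bounds
and integrating over `D`, turns the energy estimate into a superlinear recursion in `k` for the mass
`∫ r (u - k)₊`, which must then vanish at a finite level.
-/

section Calculus

lemma hasDerivAt_max_zero_sq (x : ℝ) :
    HasDerivAt (fun t : ℝ => max t 0 ^ 2) (2 * max x 0) x := by
  rw [hasDerivAt_iff_isLittleO]
  refine (Asymptotics.IsBigO.of_bound 1 (.of_forall fun t => ?_)).trans_isLittleO
    (Asymptotics.isLittleO_pow_sub_sub x one_lt_two)
  rw [one_mul, norm_pow, norm_norm, Real.norm_eq_abs, Real.norm_eq_abs, sq_abs, smul_eq_mul,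
    abs_le]
  rcases max_cases t 0 with ⟨ht, _⟩ | ⟨ht, _⟩ <;> rcases max_cases x 0 with ⟨hx, _⟩ | ⟨hx, _⟩ <;>
    rw [ht, hx] <;> constructor <;> nlinarith

lemma sq_integral_mul_le {α : Type*} [MeasurableSpace α] {μ : Measure α} {f g : α → ℝ}
    (hf : Integrable (fun x => f x ^ 2) μ) (hg : Integrable (fun x => g x ^ 2) μ)
    (hfg : Integrable (fun x => f x * g x) μ) :
    (∫ x, f x * g x ∂μ) ^ 2 ≤ (∫ x, f x ^ 2 ∂μ) * ∫ x, g x ^ 2 ∂μ := by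
  have nonneg_quadratic : ∀ t : ℝ, 0 ≤ (∫ x, f x ^ 2 ∂μ) * (t * t) +
      (2 * ∫ x, f x * g x ∂μ) * t + ∫ x, g x ^ 2 ∂μ := by
    intro t
    calc 0 ≤ ∫ x, (t * f x + g x) ^ 2 ∂μ := integral_nonneg fun x => sq_nonneg _
      _ = ∫ x, (t * t * f x ^ 2 + 2 * t * (f x * g x) + g x ^ 2) ∂μ := by
        congr 1 with x; ring
      _ = (∫ x, t * t * f x ^ 2 ∂μ) + (∫ x, 2 * t * (f x * g x) ∂μ) + ∫ x, g x ^ 2 ∂μ := by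
        rw [← integral_add (hf.const_mul _) (hfg.const_mul _)]
        exact integral_add ((hf.const_mul _).add (hfg.const_mul _)) hg
      _ = _ := by
        rw [integral_const_mul, integral_const_mul]
        ring
  have := discrim_le_zero nonneg_quadratic
  rw [discrim] at this
  linarith

lemma le_setIntegral_Ioo_add_abs_deriv {f f' : ℝ → ℝ} {a b c x : ℝ} (hc : 0 < c)
    (hcab : c ≤ b - a) (hf : ∀ y ∈ Icc a b, HasDerivAt f (f' y) y)
    (hf' : ContinuousOn f' (Icc a b)) (hf0 : ∀ y ∈ Icc a b, 0 ≤ f y) (hx : x ∈ Icc a b) :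
    f x ≤ ∫ y in Ioo a b, (f y / c + |f' y|) := by
  have hab : a ≤ b := by linarith
  have f_int : IntegrableOn f (Icc a b) :=
    (HasDerivAt.continuousOn hf).integrableOn_Icc
  have f'_int : IntegrableOn (fun y => |f' y|) (Icc a b) := hf'.abs.integrableOn_Icc
  set V := ∫ y in Icc a b, |f' y|
  have oscillation : ∀ y ∈ Icc a b, f x - V ≤ f y := by
    intro y hy
    have hsub : uIcc y x ⊆ Icc a b := (ordConnected_Icc).uIcc_subset hy hx
    have : f x - f y ≤ V := calc
      f x - f y = ∫ t in y..x, f' t :=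
        (intervalIntegral.integral_eq_sub_of_hasDerivAt (fun t ht => hf t (hsub ht))
          (hf'.mono hsub).intervalIntegrable).symm
      _ ≤ ∫ t in uIoc y x, |f' t| := (le_abs_self _).trans <| by
        simpa only [Real.norm_eq_abs] using
          intervalIntegral.norm_integral_le_integral_norm_uIoc (f := f')
      _ ≤ V := setIntegral_mono_set f'_int (.of_forall fun t => abs_nonneg _)
        (.of_forall (uIoc_subset_uIcc.trans hsub))
    linarith
  have average : (f x - V) * (b - a) ≤ ∫ y in Icc a b, f y := by
    have := setIntegral_mono_on (μ := volume) (by simp) f_int measurableSet_Icc oscillation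
    simpa [hab, mul_comm] using this
  have integral_nonneg : 0 ≤ ∫ y in Icc a b, f y := setIntegral_nonneg measurableSet_Icc hf0
  have : f x - V ≤ (∫ y in Icc a b, f y) / c := by
    rw [le_div_iff₀ hc]
    rcases le_total (f x - V) 0 with h | h <;> nlinarith
  rw [← integral_Icc_eq_integral_Ioo, integral_add (f_int.div_const c) f'_int, integral_div]
  linarith

lemma le_setIntegral_Ico_of_neg_le_deriv {f f' g : ℝ → ℝ} {a b x : ℝ}
    (hf : ∀ y ∈ Icc a b, HasDerivAt f (f' y) y) (hf' : ContinuousOn f' (Icc a b))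
    (hg : ContinuousOn g (Icc a b)) (hg0 : ∀ y ∈ Icc a b, 0 ≤ g y)
    (hfg : ∀ y ∈ Icc a b, -g y ≤ f' y) (hfb : f b = 0) (hx : x ∈ Icc a b) :
    f x ≤ ∫ y in Ico a b, g y := by
  have hsub : Icc x b ⊆ Icc a b := Icc_subset_Icc_left hx.1
  have hsub' : uIcc x b ⊆ Icc a b := by rwa [uIcc_of_le hx.2]
  calc f x = -∫ y in x..b, f' y := by
        rw [intervalIntegral.integral_eq_sub_of_hasDerivAt (fun y hy => hf y (hsub' hy))
          (hf'.mono hsub').intervalIntegrable, hfb]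
        ring
    _ ≤ -∫ y in x..b, -g y :=
      neg_le_neg <| intervalIntegral.integral_mono_on hx.2 (hg.mono hsub').neg.intervalIntegrable
        (hf'.mono hsub').intervalIntegrable fun y hy => hfg y (hsub hy)
    _ = ∫ y in Icc x b, g y := by
      rw [intervalIntegral.integral_neg, neg_neg, intervalIntegral.integral_of_le hx.2,
        integral_Icc_eq_integral_Ioc]
    _ ≤ ∫ y in Icc a b, g y :=
      setIntegral_mono_set hg.integrableOn_Icc
        ((ae_restrict_iff' measurableSet_Icc).2 (.of_forall hg0)) (.of_forall hsub)
    _ = ∫ y in Ico a b, g y := integral_Icc_eq_integral_Ico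

/-- The truncation argument of De Giorgi and Stampacchia: level `k₀ + 2δ(1 - 2⁻ⁿ)` carries at most
a fraction `16⁻ⁿ` of the initial mass. -/
lemma eq_zero_of_deGiorgi_recursion {φ : ℝ → ℝ} {A δ k₀ : ℝ} (hA : 0 < A) (hδ : 0 ≤ δ)
    (hφ0 : ∀ k, 0 ≤ φ k) (hφ : Antitone φ)
    (hrec : ∀ k d, k₀ ≤ k → 0 < d → d ^ 4 * φ (k + d) ^ 2 ≤ A * φ k ^ 3)
    (h₀ : 256 * A * φ k₀ ≤ δ ^ 4) : φ (k₀ + 2 * δ) = 0 := by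
  rcases (hφ0 k₀).eq_or_lt with hzero | hpos
  · exact le_antisymm (hzero ▸ hφ (by linarith)) (hφ0 _)
  have hδpos : 0 < δ := hδ.lt_of_ne' fun h => by
    rw [h] at h₀
    have : 0 < 256 * A * φ k₀ := by positivity
    linarith
  have decay : ∀ n : ℕ, φ (k₀ + 2 * δ * (1 - (1 / 2) ^ n)) ≤ φ k₀ * (1 / 16) ^ n := by
    intro n
    induction n with
    | zero => simp
    | succ n ih =>
      set t : ℝ := (1 / 2) ^ n with ht
      have ht0 : 0 < t := by positivity
      have ht1 : t ≤ 1 := pow_le_one₀ (by norm_num) (by norm_num)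
      have ht4 : (1 / 16 : ℝ) ^ n = t ^ 4 := by rw [ht, ← pow_mul, mul_comm, pow_mul]; norm_num
      have hk : k₀ ≤ k₀ + 2 * δ * (1 - t) := by nlinarith
      have hstep := hrec _ (δ * t) hk (by positivity)
      rw [pow_succ (1 / 16 : ℝ), ht4, pow_succ (1 / 2 : ℝ), ← ht,
        show k₀ + 2 * δ * (1 - t * (1 / 2)) = k₀ + 2 * δ * (1 - t) + δ * t by ring]
      rw [ht4] at ih
      refine abs_le_of_sq_le_sq' ?_ (by positivity) |>.2
      refine le_of_mul_le_mul_left ?_ (by positivity : 0 < (δ * t) ^ 4)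
      calc (δ * t) ^ 4 * φ (k₀ + 2 * δ * (1 - t) + δ * t) ^ 2
          ≤ A * (φ k₀ * t ^ 4) ^ 3 :=
            hstep.trans (by gcongr; exact hφ0 _)
        _ = 256 * A * φ k₀ * (φ k₀ ^ 2 * t ^ 12 / 256) := by ring
        _ ≤ δ ^ 4 * (φ k₀ ^ 2 * t ^ 12 / 256) := by gcongr
        _ = (δ * t) ^ 4 * (φ k₀ * (t ^ 4 * (1 / 16))) ^ 2 := by ring
  have tendsto_bound : Filter.Tendsto (fun n : ℕ => φ k₀ * (1 / 16) ^ n) Filter.atTop (nhds 0) := by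
    simpa using (tendsto_pow_atTop_nhds_zero_of_lt_one (r := (1 / 16 : ℝ)) (by norm_num)
      (by norm_num)).const_mul (φ k₀)
  refine le_antisymm (ge_of_tendsto' tendsto_bound fun n => (hφ ?_).trans (decay n)) (hφ0 _)
  nlinarith [pow_pos (by norm_num : (0 : ℝ) < 1 / 2) n]

lemma le_sSup_image_of_mem_closure {X : Type*} [TopologicalSpace X] {s : Set X} {f : X → ℝ}
    (hs : IsCompact (closure s)) (hf : ContinuousOn f (closure s)) {x : X} (hx : x ∈ closure s) :
    f x ≤ sSup (f '' s) :=
  le_on_closure (fun _ hy => le_csSup ((hs.bddAbove_image hf).mono (image_mono subset_closure))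
    (mem_image_of_mem f hy)) hf continuousOn_const hx

end Calculus

section Sections

variable {α β : Type*}

/-- The horizontal section of `D` at height `y`. -/
def row (D : Set (α × β)) (y : β) : Set α := {x | (x, y) ∈ D}

/-- The vertical section of `D` over `x`. -/
def column (D : Set (α × β)) (x : α) : Set β := {y | (x, y) ∈ D}

variable [MeasurableSpace α] [MeasurableSpace β] {μ : Measure α} {ν : Measure β}
  {D : Set (α × β)} {f : α × β → ℝ}

lemma measurableSet_row (hD : MeasurableSet D) (y : β) : MeasurableSet (row D y) :=
  hD.preimage measurable_prodMk_right

lemma measurableSet_column (hD : MeasurableSet D) (x : α) : MeasurableSet (column D x) :=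
  hD.preimage measurable_prodMk_left

lemma setIntegral_row_eq_integral_indicator (hD : MeasurableSet D) (y : β) :
    ∫ x in row D y, f (x, y) ∂μ = ∫ x, D.indicator f (x, y) ∂μ := by
  rw [← integral_indicator (measurableSet_row hD y)]
  rfl

lemma setIntegral_column_eq_integral_indicator (hD : MeasurableSet D) (x : α) :
    ∫ y in column D x, f (x, y) ∂ν = ∫ y, D.indicator f (x, y) ∂ν := by
  rw [← integral_indicator (measurableSet_column hD x)]
  rfl

variable [SFinite ν]

lemma integrable_setIntegral_column (hD : MeasurableSet D) (hf : IntegrableOn f D (μ.prod ν)) :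
    Integrable (fun x => ∫ y in column D x, f (x, y) ∂ν) μ := by
  simp_rw [setIntegral_column_eq_integral_indicator hD]
  exact ((integrable_indicator_iff hD).2 hf).integral_prod_left

variable [SFinite μ]

lemma setIntegral_eq_integral_column (hD : MeasurableSet D) (hf : IntegrableOn f D (μ.prod ν)) :
    ∫ p in D, f p ∂μ.prod ν = ∫ x, ∫ y in column D x, f (x, y) ∂ν ∂μ := by
  simp_rw [setIntegral_column_eq_integral_indicator hD, ← integral_indicator hD]
  exact integral_prod _ ((integrable_indicator_iff hD).2 hf)

lemma integrable_setIntegral_row (hD : MeasurableSet D) (hf : IntegrableOn f D (μ.prod ν)) :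
    Integrable (fun y => ∫ x in row D y, f (x, y) ∂μ) ν := by
  simp_rw [setIntegral_row_eq_integral_indicator hD]
  exact ((integrable_indicator_iff hD).2 hf).integral_prod_right

lemma setIntegral_eq_integral_row (hD : MeasurableSet D) (hf : IntegrableOn f D (μ.prod ν)) :
    ∫ p in D, f p ∂μ.prod ν = ∫ y, ∫ x in row D y, f (x, y) ∂μ ∂ν := by
  simp_rw [setIntegral_row_eq_integral_indicator hD, ← integral_indicator hD]
  exact integral_prod_symm _ ((integrable_indicator_iff hD).2 hf)

lemma setIntegral_sq_le_mul_of_section_bounds {F A B : α × β → ℝ} (hD : MeasurableSet D)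
    (hA : IntegrableOn A D (μ.prod ν)) (hB : IntegrableOn B D (μ.prod ν))
    (hF0 : ∀ p ∈ D, 0 ≤ F p) (hA0 : ∀ p ∈ D, 0 ≤ A p) (hB0 : ∀ p ∈ D, 0 ≤ B p)
    (hFA : ∀ p ∈ D, F p ≤ ∫ x in row D p.2, A (x, p.2) ∂μ)
    (hFB : ∀ p ∈ D, F p ≤ ∫ y in column D p.1, B (p.1, y) ∂ν) :
    ∫ p in D, F p ^ 2 ∂μ.prod ν ≤ (∫ p in D, A p ∂μ.prod ν) * ∫ p in D, B p ∂μ.prod ν := by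
  have row_nonneg : ∀ y, 0 ≤ ∫ x in row D y, A (x, y) ∂μ := fun y =>
    setIntegral_nonneg (measurableSet_row hD y) fun x hx => hA0 _ hx
  have column_nonneg : ∀ x, 0 ≤ ∫ y in column D x, B (x, y) ∂ν := fun x =>
    setIntegral_nonneg (measurableSet_column hD x) fun y hy => hB0 _ hy
  rw [setIntegral_eq_integral_row hD hA, setIntegral_eq_integral_column hD hB, mul_comm,
    ← integral_prod_mul, ← integral_indicator hD]
  refine integral_mono_of_nonneg (.of_forall (indicator_nonneg fun p _ => sq_nonneg _))
    ((integrable_setIntegral_column hD hB).mul_prod (integrable_setIntegral_row hD hA))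
    (.of_forall (indicator_le' (fun p hp => ?_) fun p _ =>
      mul_nonneg (column_nonneg _) (row_nonneg _)))
  rw [sq]
  exact mul_le_mul (hFB p hp) (hFA p hp) (hF0 p hp) (column_nonneg _)

end Sections

section Excess

variable {α : Type*}

/-- The excess `(u - k)₊` of `u` over the level `k`. -/
def excess (u : α → ℝ) (k : ℝ) (p : α) : ℝ := max (u p - k) 0

lemma excess_nonneg (u : α → ℝ) (k : ℝ) (p : α) : 0 ≤ excess u k p := le_max_right _ _

lemma excess_anti (u : α → ℝ) (p : α) : Antitone fun k => excess u k p := fun _ _ hkl =>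
  max_le_max_right 0 (sub_le_sub_left hkl (u p))

lemma excess_eq_zero {u : α → ℝ} {k : ℝ} {p : α} (h : u p ≤ k) : excess u k p = 0 :=
  max_eq_right (sub_nonpos.2 h)

lemma le_of_excess_eq_zero {u : α → ℝ} {k : ℝ} {p : α} (h : excess u k p = 0) : u p ≤ k :=
  sub_nonpos.1 (max_eq_right_iff.1 h)

lemma mul_excess_sq_le (u : α → ℝ) (k : ℝ) (p : α) :
    k * excess u k p ^ 2 ≤ u p * excess u k p ^ 2 := by
  rcases le_total (u p) k with h | h
  · rw [excess_eq_zero h]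
    simp
  · gcongr

lemma sq_mul_excess_add_le (u : α → ℝ) (k : ℝ) {d : ℝ} (hd : 0 ≤ d) (p : α) :
    d ^ 2 * excess u (k + d) p ≤ excess u k p ^ 3 := by
  rcases le_total (u p) (k + d) with h | h
  · rw [excess_eq_zero h, mul_zero]
    exact pow_nonneg (excess_nonneg u k p) 3
  · have hk : excess u k p = u p - k := max_eq_left (by linarith)
    have hkd : excess u (k + d) p = u p - (k + d) := max_eq_left (by linarith)
    rw [hk, hkd]
    calc d ^ 2 * (u p - (k + d)) ≤ (u p - k) ^ 2 * (u p - k) := by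
          gcongr <;> linarith
      _ = (u p - k) ^ 3 := by ring

lemma excess_zero_le_abs (u : α → ℝ) (p : α) : excess u 0 p ≤ |u p| :=
  max_le (by simpa using le_abs_self (u p)) (abs_nonneg _)

end Excess

section LineDerivatives

variable {E : Type*} [NormedAddCommGroup E] [NormedSpace ℝ E] {f f' g g' : E → ℝ} {v : E}
  {K L U : Set E}

/-- On `K`, the function `f` is continuous and has the continuous derivative `f'` in the
direction `v`. The derivative is two-sided, so `f` matters in a neighbourhood of `K`. -/
structure HasContLineDerivOn (f f' : E → ℝ) (v : E) (K : Set E) : Prop where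
  continuousOn : ContinuousOn f K
  continuousOn_deriv : ContinuousOn f' K
  hasLineDerivAt : ∀ p ∈ K, HasLineDerivAt ℝ f (f' p) p v

namespace HasContLineDerivOn

lemma mono (hf : HasContLineDerivOn f f' v L) (hKL : K ⊆ L) : HasContLineDerivOn f f' v K :=
  ⟨hf.continuousOn.mono hKL, hf.continuousOn_deriv.mono hKL,
    fun p hp => hf.hasLineDerivAt p (hKL hp)⟩

lemma mul (hf : HasContLineDerivOn f f' v K) (hg : HasContLineDerivOn g g' v K) :
    HasContLineDerivOn (fun p => f p * g p) (fun p => f' p * g p + f p * g' p) v K where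
  continuousOn := hf.continuousOn.mul hg.continuousOn
  continuousOn_deriv := (hf.continuousOn_deriv.mul hg.continuousOn).add
    (hf.continuousOn.mul hg.continuousOn_deriv)
  hasLineDerivAt p hp := by
    simpa [HasLineDerivAt, Pi.mul_def] using (hf.hasLineDerivAt p hp).mul (hg.hasLineDerivAt p hp)

lemma excess_sq (hf : HasContLineDerivOn f f' v K) (k : ℝ) :
    HasContLineDerivOn (fun p => excess f k p ^ 2) (fun p => 2 * excess f k p * f' p) v K := by
  have hexcess : ContinuousOn (excess f k) K :=
    (hf.continuousOn.sub continuousOn_const).sup continuousOn_const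
  refine ⟨hexcess.pow 2, (hexcess.const_mul 2).mul hf.continuousOn_deriv, fun p hp => ?_⟩
  have := (hasDerivAt_max_zero_sq _).comp (0 : ℝ) ((hf.hasLineDerivAt p hp).sub_const k)
  simpa [HasLineDerivAt, excess, Function.comp_def] using this

end HasContLineDerivOn

lemma hasContLineDerivOn_lineDeriv (hU : IsOpen U) (hf : ContDiffOn ℝ 1 f U) (v : E) :
    HasContLineDerivOn f (lineDeriv ℝ f · v) v U where
  continuousOn := hf.continuousOn
  continuousOn_deriv :=
    ((hf.continuousOn_fderiv_of_isOpen hU le_rfl).clm_apply continuousOn_const).congr fun _ hp =>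
      ((hf.contDiffAt (hU.mem_nhds hp)).differentiableAt one_ne_zero).lineDeriv_eq_fderiv
  hasLineDerivAt _ hp :=
    ((hf.contDiffAt (hU.mem_nhds hp)).differentiableAt one_ne_zero).lineDifferentiableAt
      |>.hasLineDerivAt

lemma contDiffOn_lineDeriv {n : ℕ} (hU : IsOpen U) (hf : ContDiffOn ℝ (n + 1) f U) (v : E) :
    ContDiffOn ℝ n (lineDeriv ℝ f · v) U :=
  ((hf.fderiv_of_isOpen hU le_rfl).clm_apply contDiffOn_const).congr fun _ hp =>
    ((hf.contDiffAt (hU.mem_nhds hp)).differentiableAt (by simp)).lineDeriv_eq_fderiv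

end LineDerivatives

section CoordinateDerivatives

variable {f f' : ℝ × ℝ → ℝ} {D K : Set (ℝ × ℝ)} {r z a b : ℝ}

lemma pdr_eq_lineDeriv (f : ℝ × ℝ → ℝ) : pdr f = (lineDeriv ℝ f · (1, 0)) := by
  funext p
  have := deriv_comp_const_add (fun r => f (r, p.2)) p.1 0
  simpa [pdr, lineDeriv, Prod.add_def] using this.symm

lemma pdz_eq_lineDeriv (f : ℝ × ℝ → ℝ) : pdz f = (lineDeriv ℝ f · (0, 1)) := by
  funext p
  have := deriv_comp_const_add (fun z => f (p.1, z)) p.2 0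
  simpa [pdz, lineDeriv, Prod.add_def] using this.symm

lemma pdr_neg (f : ℝ × ℝ → ℝ) : pdr (-f) = -pdr f := funext fun _ => deriv.fun_neg

lemma pdz_neg (f : ℝ × ℝ → ℝ) : pdz (-f) = -pdz f := funext fun _ => deriv.fun_neg

lemma cylLap_neg (f : ℝ × ℝ → ℝ) : cylLap (-f) = -cylLap f := by
  funext p
  simp only [cylLap, pdr_neg, pdz_neg, Pi.neg_apply]
  ring

namespace HasContLineDerivOn

lemma fst_mul_horizontal (hf : HasContLineDerivOn f f' (1, 0) K) :
    HasContLineDerivOn (fun p => p.1 * f p) (fun p => f p + p.1 * f' p) (1, 0) K := by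
  have hfst : HasContLineDerivOn Prod.fst (fun _ => 1) ((1, 0) : ℝ × ℝ) K :=
    ⟨continuousOn_fst, continuousOn_const, fun p _ => by
      simpa [HasLineDerivAt] using (hasDerivAt_id (0 : ℝ)).const_add p.1⟩
  simpa only [one_mul] using hfst.mul hf

lemma fst_mul_vertical (hf : HasContLineDerivOn f f' (0, 1) K) :
    HasContLineDerivOn (fun p => p.1 * f p) (fun p => p.1 * f' p) (0, 1) K := by
  have hfst : HasContLineDerivOn Prod.fst (fun _ => 0) ((0, 1) : ℝ × ℝ) K :=
    ⟨continuousOn_fst, continuousOn_const, fun p _ => by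
      simpa [HasLineDerivAt] using hasDerivAt_const (0 : ℝ) p.1⟩
  simpa only [zero_mul, zero_add] using hfst.mul hf

lemma hasDerivAt_fst (hf : HasContLineDerivOn f f' (1, 0) K) (hp : (r, z) ∈ K) :
    HasDerivAt (fun s => f (s, z)) (f' (r, z)) r := by
  have := hf.hasLineDerivAt _ hp
  rw [HasLineDerivAt, ← sub_self r] at this
  simpa using this.comp_sub_const r r

lemma hasDerivAt_snd (hf : HasContLineDerivOn f f' (0, 1) K) (hp : (r, z) ∈ K) :
    HasDerivAt (fun t => f (r, t)) (f' (r, z)) z := by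
  have := hf.hasLineDerivAt _ hp
  rw [HasLineDerivAt, ← sub_self z] at this
  simpa using this.comp_sub_const z z

end HasContLineDerivOn

lemma mapsTo_closure_of_row_eq_Ico (hab : a < b) (h : row D z = Ico a b) :
    MapsTo (fun r => (r, z)) (Icc a b) (closure D) := by
  rw [← closure_Ico hab.ne, ← h]
  exact MapsTo.closure (fun _ hr => hr) (by fun_prop)

lemma mapsTo_closure_of_column_eq_Ioo (hab : a < b) (h : column D r = Ioo a b) :
    MapsTo (fun z => (r, z)) (Icc a b) (closure D) := by
  rw [← closure_Ioo hab.ne, ← h]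
  exact MapsTo.closure (fun _ hz => hz) (by fun_prop)

lemma setIntegral_row_eq_sub (hf : HasContLineDerivOn f f' (1, 0) (closure D)) (hab : a < b)
    (h : row D z = Ico a b) : ∫ r in row D z, f' (r, z) = f (b, z) - f (a, z) := by
  have hmaps := mapsTo_closure_of_row_eq_Ico hab h
  rw [h, integral_Ico_eq_integral_Ioc, ← intervalIntegral.integral_of_le hab.le]
  rw [← uIcc_of_le hab.le] at hmaps
  exact intervalIntegral.integral_eq_sub_of_hasDerivAt (fun r hr => hf.hasDerivAt_fst (hmaps hr))
    (hf.continuousOn_deriv.comp (by fun_prop) hmaps).intervalIntegrable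

lemma setIntegral_column_eq_sub (hf : HasContLineDerivOn f f' (0, 1) (closure D)) (hab : a < b)
    (h : column D r = Ioo a b) : ∫ z in column D r, f' (r, z) = f (r, b) - f (r, a) := by
  have hmaps := mapsTo_closure_of_column_eq_Ioo hab h
  rw [h, ← integral_Ioc_eq_integral_Ioo, ← intervalIntegral.integral_of_le hab.le]
  rw [← uIcc_of_le hab.le] at hmaps
  exact intervalIntegral.integral_eq_sub_of_hasDerivAt (fun z hz => hf.hasDerivAt_snd (hmaps hz))
    (hf.continuousOn_deriv.comp (by fun_prop) hmaps).intervalIntegrable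

end CoordinateDerivatives

/-- The properties of a plane section `D` in the coordinates `(r, x₃)`, with horizontal boundary
part `H` and vertical boundary part `V`, on which the Moser iteration rests: `D` is composed of
intervals in both directions, and the vertical ones are long compared with `r ^ 2`. -/
structure IsMeridianDomain (D H V : Set (ℝ × ℝ)) : Prop where
  measurableSet : MeasurableSet D
  isCompact_closure : IsCompact (closure D)
  fst_mem_Ioc : ∀ p ∈ closure D, p.1 ∈ Ioc 0 1
  subset_closure_interior : D ⊆ closure (interior D)
  exists_row : ∀ z, (row D z).Nonempty →
    ∃ a b, row D z = Ico a b ∧ (a, z) ∈ V ∧ (b, z) ∈ V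
  exists_column : ∀ r, (column D r).Nonempty →
    ∃ a b, r ^ 2 ≤ b - a ∧ column D r = Ioo a b ∧ (r, a) ∈ H ∧ (r, b) ∈ H

namespace IsMeridianDomain

variable {D H V : Set (ℝ × ℝ)} {f f' g : ℝ × ℝ → ℝ}

lemma fst_pos (hD : IsMeridianDomain D H V) {p : ℝ × ℝ} (hp : p ∈ closure D) : 0 < p.1 :=
  (hD.fst_mem_Ioc p hp).1

lemma integrableOn (hD : IsMeridianDomain D H V) (hf : ContinuousOn f (closure D)) :
    IntegrableOn f D :=
  (hf.integrableOn_compact hD.isCompact_closure).mono_set subset_closure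

lemma continuousOn_inv_fst (hD : IsMeridianDomain D H V) :
    ContinuousOn (fun p : ℝ × ℝ => p.1⁻¹) (closure D) :=
  continuousOn_fst.inv₀ fun _ hp => (hD.fst_pos hp).ne'

lemma setIntegral_eq_zero_of_vertical_boundary (hD : IsMeridianDomain D H V)
    (hf : HasContLineDerivOn f f' (1, 0) (closure D)) (hV : ∀ p ∈ V, f p = 0) :
    ∫ p in D, f' p = 0 := by
  rw [Measure.volume_eq_prod,
    setIntegral_eq_integral_row hD.measurableSet (hD.integrableOn hf.continuousOn_deriv)]
  refine integral_eq_zero_of_ae (.of_forall fun z => ?_)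
  rcases (row D z).eq_empty_or_nonempty with hempty | hne
  · simp [hempty]
  · obtain ⟨a, b, hrow, ha, hb⟩ := hD.exists_row z hne
    have hab : a < b := nonempty_Ico.1 (hrow ▸ hne)
    simp [setIntegral_row_eq_sub hf hab hrow, hV _ ha, hV _ hb]

lemma setIntegral_eq_zero_of_horizontal_boundary (hD : IsMeridianDomain D H V)
    (hf : HasContLineDerivOn f f' (0, 1) (closure D)) (hH : ∀ p ∈ H, f p = 0) :
    ∫ p in D, f' p = 0 := by
  rw [Measure.volume_eq_prod,
    setIntegral_eq_integral_column hD.measurableSet (hD.integrableOn hf.continuousOn_deriv)]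
  refine integral_eq_zero_of_ae (.of_forall fun r => ?_)
  rcases (column D r).eq_empty_or_nonempty with hempty | hne
  · simp [hempty]
  · obtain ⟨a, b, -, hcolumn, ha, hb⟩ := hD.exists_column r hne
    have hab : a < b := nonempty_Ioo.1 (hcolumn ▸ hne)
    simp [setIntegral_column_eq_sub hf hab hcolumn, hH _ ha, hH _ hb]

lemma abs_setIntegral_le_two_mul_of_column_trace (hD : IsMeridianDomain D H V)
    (hf : HasContLineDerivOn f f' (0, 1) (closure D)) (hg : ContinuousOn g (closure D))
    (hfg : ∀ r, ∀ z ∈ closure (column D r), |f (r, z)| ≤ ∫ t in column D r, g (r, t)) :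
    |∫ p in D, f' p| ≤ 2 * ∫ p in D, g p := by
  rw [Measure.volume_eq_prod,
    setIntegral_eq_integral_column hD.measurableSet (hD.integrableOn hf.continuousOn_deriv),
    setIntegral_eq_integral_column hD.measurableSet (hD.integrableOn hg), ← integral_const_mul,
    ← Real.norm_eq_abs]
  refine norm_integral_le_of_norm_le
    ((integrable_setIntegral_column hD.measurableSet (hD.integrableOn hg)).const_mul 2)
    (.of_forall fun r => ?_)
  rcases (column D r).eq_empty_or_nonempty with hempty | hne
  · simp [hempty]
  · obtain ⟨a, b, -, hcolumn, -, -⟩ := hD.exists_column r hne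
    have hab : a < b := nonempty_Ioo.1 (hcolumn ▸ hne)
    have hclosure : closure (column D r) = Icc a b := by rw [hcolumn, closure_Ioo hab.ne]
    have ha := hfg r a (hclosure ▸ left_mem_Icc.2 hab.le)
    have hb := hfg r b (hclosure ▸ right_mem_Icc.2 hab.le)
    rw [setIntegral_column_eq_sub hf hab hcolumn, Real.norm_eq_abs]
    exact (abs_sub _ _).trans (by linarith)

lemma le_setIntegral_column (hD : IsMeridianDomain D H V)
    (hf : HasContLineDerivOn f f' (0, 1) (closure D)) (hf0 : ∀ p ∈ closure D, 0 ≤ f p)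
    {r z : ℝ} (hz : z ∈ closure (column D r)) :
    f (r, z) ≤ ∫ t in column D r, (f (r, t) / r ^ 2 + |f' (r, t)|) := by
  obtain ⟨a, b, hr, hcolumn, -, -⟩ := hD.exists_column r (closure_nonempty_iff.1 ⟨z, hz⟩)
  have hab : a < b := nonempty_Ioo.1 (hcolumn ▸ closure_nonempty_iff.1 ⟨z, hz⟩)
  have hmaps := mapsTo_closure_of_column_eq_Ioo hab hcolumn
  rw [hcolumn, closure_Ioo hab.ne] at hz
  have hr0 : 0 < r := hD.fst_pos (hmaps hz)
  rw [hcolumn]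
  exact le_setIntegral_Ioo_add_abs_deriv (f := fun t => f (r, t)) (by positivity) hr
    (fun t ht => hf.hasDerivAt_snd (hmaps ht)) (hf.continuousOn_deriv.comp (by fun_prop) hmaps)
    (fun t ht => hf0 _ (hmaps ht)) hz

lemma le_setIntegral_row (hD : IsMeridianDomain D H V)
    (hf : HasContLineDerivOn f f' (1, 0) (closure D)) (hV : ∀ p ∈ V, f p = 0)
    (hg : ContinuousOn g (closure D)) (hg0 : ∀ p ∈ closure D, 0 ≤ g p)
    (hfg : ∀ p ∈ closure D, -g p ≤ f' p) {p : ℝ × ℝ} (hp : p ∈ D) :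
    f p ≤ ∫ r in row D p.2, g (r, p.2) := by
  have hne : (row D p.2).Nonempty := ⟨p.1, hp⟩
  obtain ⟨a, b, hrow, -, hb⟩ := hD.exists_row p.2 hne
  have hab : a < b := nonempty_Ico.1 (hrow ▸ hne)
  have hmaps := mapsTo_closure_of_row_eq_Ico hab hrow
  have hp1 : p.1 ∈ Ico a b := hrow ▸ hp
  rw [hrow]
  exact le_setIntegral_Ico_of_neg_le_deriv (f := fun r => f (r, p.2))
    (fun r hr => hf.hasDerivAt_fst (hmaps hr)) (hf.continuousOn_deriv.comp (by fun_prop) hmaps)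
    (hg.comp (by fun_prop) hmaps) (fun r hr => hg0 _ (hmaps hr)) (fun r hr => hfg _ (hmaps hr))
    (hV _ hb) (Ico_subset_Icc_self hp1)

end IsMeridianDomain

/-- `u` is of class `C²` and `ω` of class `C¹` up to the boundary of `D`, and
`Δu - u / r² = ∂_{x₃} ω` in `D`, with the Neumann condition on `H` and the Dirichlet condition
on `V`. -/
structure IsSolution (D H V : Set (ℝ × ℝ)) (u ω : ℝ × ℝ → ℝ) : Prop where
  contDiffOn_solution : ∃ U, IsOpen U ∧ closure D ⊆ U ∧ ContDiffOn ℝ 2 u U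
  contDiffOn_source : ∃ U, IsOpen U ∧ closure D ⊆ U ∧ ContDiffOn ℝ 1 ω U
  equation : ∀ p ∈ D, cylLap u p - u p / p.1 ^ 2 = pdz ω p
  neumann : ∀ p ∈ H, pdz u p = 0
  dirichlet : ∀ p ∈ V, u p = 0

namespace IsSolution

variable {D H V : Set (ℝ × ℝ)} {u ω : ℝ × ℝ → ℝ}

protected lemma neg (h : IsSolution D H V u ω) : IsSolution D H V (-u) (-ω) where
  contDiffOn_solution := h.contDiffOn_solution.imp fun _ hU => ⟨hU.1, hU.2.1, hU.2.2.neg⟩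
  contDiffOn_source := h.contDiffOn_source.imp fun _ hU => ⟨hU.1, hU.2.1, hU.2.2.neg⟩
  equation p hp := by
    rw [cylLap_neg, pdz_neg, Pi.neg_apply, Pi.neg_apply, Pi.neg_apply, ← h.equation p hp]
    ring
  neumann p hp := by rw [pdz_neg, Pi.neg_apply, h.neumann p hp, neg_zero]
  dirichlet p hp := by rw [Pi.neg_apply, h.dirichlet p hp, neg_zero]

lemma hasContLineDerivOn_pdr (h : IsSolution D H V u ω) :
    HasContLineDerivOn u (pdr u) (1, 0) (closure D) := by
  obtain ⟨U, hU, hDU, hu⟩ := h.contDiffOn_solution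
  rw [pdr_eq_lineDeriv]
  exact (hasContLineDerivOn_lineDeriv hU (hu.of_le one_le_two) _).mono hDU

lemma hasContLineDerivOn_pdz (h : IsSolution D H V u ω) :
    HasContLineDerivOn u (pdz u) (0, 1) (closure D) := by
  obtain ⟨U, hU, hDU, hu⟩ := h.contDiffOn_solution
  rw [pdz_eq_lineDeriv]
  exact (hasContLineDerivOn_lineDeriv hU (hu.of_le one_le_two) _).mono hDU

lemma hasContLineDerivOn_pdr_pdr (h : IsSolution D H V u ω) :
    HasContLineDerivOn (pdr u) (pdr (pdr u)) (1, 0) (closure D) := by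
  obtain ⟨U, hU, hDU, hu⟩ := h.contDiffOn_solution
  rw [pdr_eq_lineDeriv (pdr u), pdr_eq_lineDeriv u]
  exact (hasContLineDerivOn_lineDeriv hU (contDiffOn_lineDeriv (n := 1) hU hu _) _).mono hDU

lemma hasContLineDerivOn_pdz_pdz (h : IsSolution D H V u ω) :
    HasContLineDerivOn (pdz u) (pdz (pdz u)) (0, 1) (closure D) := by
  obtain ⟨U, hU, hDU, hu⟩ := h.contDiffOn_solution
  rw [pdz_eq_lineDeriv (pdz u), pdz_eq_lineDeriv u]
  exact (hasContLineDerivOn_lineDeriv hU (contDiffOn_lineDeriv (n := 1) hU hu _) _).mono hDU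

lemma hasContLineDerivOn_source (h : IsSolution D H V u ω) :
    HasContLineDerivOn ω (pdz ω) (0, 1) (closure D) := by
  obtain ⟨U, hU, hDU, hω⟩ := h.contDiffOn_source
  rw [pdz_eq_lineDeriv]
  exact (hasContLineDerivOn_lineDeriv hU hω _).mono hDU

lemma continuousOn_excess (h : IsSolution D H V u ω) (k : ℝ) :
    ContinuousOn (excess u k) (closure D) :=
  (h.hasContLineDerivOn_pdr.continuousOn.sub continuousOn_const).sup continuousOn_const

lemma excess_eq_zero_of_mem_vertical (h : IsSolution D H V u ω) {k : ℝ} (hk : 0 ≤ k)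
    {p : ℝ × ℝ} (hp : p ∈ V) : excess u k p = 0 :=
  excess_eq_zero (h.dirichlet p hp ▸ hk)

end IsSolution

section Energy

variable {D H V : Set (ℝ × ℝ)} {u ω : ℝ × ℝ → ℝ} {k W : ℝ}

/-- The integral of the excess of `u` over `k` with respect to the measure `r dr dx₃`. -/
def excessMass (D : Set (ℝ × ℝ)) (u : ℝ × ℝ → ℝ) (k : ℝ) : ℝ := ∫ p in D, p.1 * excess u k p

/-- The density controlled by testing the equation with the square of `v = (u - k)₊`. -/
def energyDensity (u : ℝ × ℝ → ℝ) (W k : ℝ) (p : ℝ × ℝ) : ℝ :=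
  p.1 * excess u k p * (pdr u p ^ 2 + pdz u p ^ 2) + 2 * W * (excess u k p ^ 2 * p.1⁻¹)

/-- The density whose integral over a row dominates `r (u - k)₊²` on that row. -/
def rowDensity (u : ℝ × ℝ → ℝ) (k : ℝ) (p : ℝ × ℝ) : ℝ :=
  p.1 * |2 * excess u k p * pdr u p|

/-- The density whose integral over a column dominates `r (u - k)₊²` on that column. -/
def columnDensity (u : ℝ × ℝ → ℝ) (k : ℝ) (p : ℝ × ℝ) : ℝ :=
  p.1 * (excess u k p ^ 2 / p.1 ^ 2 + |2 * excess u k p * pdz u p|)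

lemma columnDensity_eq (u : ℝ × ℝ → ℝ) (k : ℝ) {p : ℝ × ℝ} (hp : 0 < p.1) :
    columnDensity u k p = excess u k p ^ 2 * p.1⁻¹ + 2 * (p.1 * excess u k p * |pdz u p|) := by
  rw [columnDensity, abs_mul, abs_of_nonneg (mul_nonneg two_pos.le (excess_nonneg u k p))]
  field_simp

lemma rowDensity_eq (u : ℝ × ℝ → ℝ) (k : ℝ) (p : ℝ × ℝ) :
    rowDensity u k p = 2 * (p.1 * excess u k p * |pdr u p|) := by
  rw [rowDensity, abs_mul, abs_of_nonneg (mul_nonneg two_pos.le (excess_nonneg u k p))]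
  ring

lemma rowDensity_nonneg (u : ℝ × ℝ → ℝ) (k : ℝ) {p : ℝ × ℝ} (hp : 0 ≤ p.1) :
    0 ≤ rowDensity u k p := by
  rw [rowDensity]; positivity

lemma columnDensity_nonneg (u : ℝ × ℝ → ℝ) (k : ℝ) {p : ℝ × ℝ} (hp : 0 ≤ p.1) :
    0 ≤ columnDensity u k p := by
  rw [columnDensity]; positivity

lemma IsMeridianDomain.excessMass_nonneg (hD : IsMeridianDomain D H V) (u : ℝ × ℝ → ℝ) (k : ℝ) :
    0 ≤ excessMass D u k :=
  setIntegral_nonneg hD.measurableSet fun p hp =>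
    mul_nonneg (hD.fst_pos (subset_closure hp)).le (excess_nonneg u k p)

namespace IsSolution

lemma continuousOn_energyDensity (hD : IsMeridianDomain D H V) (h : IsSolution D H V u ω)
    (W k : ℝ) : ContinuousOn (energyDensity u W k) (closure D) := by
  have hv := h.continuousOn_excess k
  have hr := h.hasContLineDerivOn_pdr.continuousOn_deriv
  have hz := h.hasContLineDerivOn_pdz.continuousOn_deriv
  have hinv := hD.continuousOn_inv_fst
  unfold energyDensity
  fun_prop

lemma continuousOn_rowDensity (h : IsSolution D H V u ω) (k : ℝ) :
    ContinuousOn (rowDensity u k) (closure D) := by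
  have hv := h.continuousOn_excess k
  have hr := h.hasContLineDerivOn_pdr.continuousOn_deriv
  exact continuousOn_fst.mul ((hv.const_mul 2).mul hr).abs

lemma continuousOn_columnDensity (hD : IsMeridianDomain D H V) (h : IsSolution D H V u ω)
    (k : ℝ) : ContinuousOn (columnDensity u k) (closure D) := by
  have hv := h.continuousOn_excess k
  have hz := h.hasContLineDerivOn_pdz.continuousOn_deriv
  have hinv := hD.continuousOn_inv_fst
  have hquot : ContinuousOn (fun p => excess u k p ^ 2 / p.1 ^ 2) (closure D) := by
    simp only [div_eq_mul_inv, ← inv_pow]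
    fun_prop
  exact continuousOn_fst.mul (hquot.add ((hv.const_mul 2).mul hz).abs)

lemma mul_excess_sq_le_setIntegral_row (hD : IsMeridianDomain D H V) (h : IsSolution D H V u ω)
    (hk : 0 ≤ k) {p : ℝ × ℝ} (hp : p ∈ D) :
    p.1 * excess u k p ^ 2 ≤ ∫ r in row D p.2, rowDensity u k (r, p.2) := by
  refine hD.le_setIntegral_row
    (h.hasContLineDerivOn_pdr.excess_sq k).fst_mul_horizontal
    (fun q hq => by simp [h.excess_eq_zero_of_mem_vertical hk hq]) (h.continuousOn_rowDensity k)
    (fun q hq => rowDensity_nonneg u k (hD.fst_pos hq).le) (fun q hq => ?_) hp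
  have := mul_le_mul_of_nonneg_left (neg_abs_le (2 * excess u k q * pdr u q)) (hD.fst_pos hq).le
  have := sq_nonneg (excess u k q)
  rw [rowDensity]
  linarith

lemma mul_excess_sq_le_setIntegral_column (hD : IsMeridianDomain D H V)
    (h : IsSolution D H V u ω) {r z : ℝ} (hr : 0 ≤ r) (hz : z ∈ closure (column D r)) :
    r * excess u k (r, z) ^ 2 ≤ ∫ t in column D r, columnDensity u k (r, t) := by
  simp only [columnDensity, integral_const_mul]
  exact mul_le_mul_of_nonneg_left (hD.le_setIntegral_column (h.hasContLineDerivOn_pdz.excess_sq k)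
    (fun p _ => sq_nonneg _) hz) hr

/-- Integrate the derivatives of `r v² ∂_r u` and `r v² ∂_{x₃} u`, where `v = (u - k)₊`. -/
lemma energy_identity (hD : IsMeridianDomain D H V) (h : IsSolution D H V u ω) (hk : 0 ≤ k) :
    ∫ p in D, (u p * excess u k p ^ 2 * p.1⁻¹
        + 2 * (p.1 * excess u k p * (pdr u p ^ 2 + pdz u p ^ 2))
        - 2 * (p.1 * excess u k p * (ω p * pdz u p))) =
      -∫ p in D, p.1 * (pdz ω p * excess u k p ^ 2 + ω p * (2 * excess u k p * pdz u p)) := by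
  have hr := (h.hasContLineDerivOn_pdr_pdr.mul
    (h.hasContLineDerivOn_pdr.excess_sq k)).fst_mul_horizontal
  have hz := (h.hasContLineDerivOn_pdz_pdz.mul
    (h.hasContLineDerivOn_pdz.excess_sq k)).fst_mul_vertical
  have hsource := (h.hasContLineDerivOn_source.mul
    (h.hasContLineDerivOn_pdz.excess_sq k)).fst_mul_vertical
  have hr_zero := hD.setIntegral_eq_zero_of_vertical_boundary hr fun p hp => by
    simp [h.excess_eq_zero_of_mem_vertical hk hp]
  have hz_zero := hD.setIntegral_eq_zero_of_horizontal_boundary hz fun p hp => by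
    simp [h.neumann p hp]
  have hr_int := hD.integrableOn hr.continuousOn_deriv
  have hz_int := hD.integrableOn hz.continuousOn_deriv
  have hsource_int := hD.integrableOn hsource.continuousOn_deriv
  have integral_combination := integral_sub' (hr_int.add hz_int) hsource_int
  rw [integral_add' hr_int hz_int, hr_zero, hz_zero, add_zero, zero_sub] at integral_combination
  rw [← integral_combination]
  refine setIntegral_congr_fun hD.measurableSet fun p hp => ?_
  have hp0 : p.1 ≠ 0 := (hD.fst_pos (subset_closure hp)).ne'
  simp only [Pi.add_apply, Pi.sub_apply, ← h.equation p hp, cylLap]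
  field_simp
  ring

lemma abs_setIntegral_source_le (hD : IsMeridianDomain D H V) (h : IsSolution D H V u ω)
    (hω : ∀ p ∈ closure D, |ω p| ≤ W) (k : ℝ) :
    |∫ p in D, p.1 * (pdz ω p * excess u k p ^ 2 + ω p * (2 * excess u k p * pdz u p))| ≤
      2 * W * ∫ p in D, columnDensity u k p := by
  rw [mul_assoc, ← integral_const_mul]
  refine hD.abs_setIntegral_le_two_mul_of_column_trace
    (h.hasContLineDerivOn_source.mul (h.hasContLineDerivOn_pdz.excess_sq k)).fst_mul_vertical
    ((h.continuousOn_columnDensity hD k).const_mul W) fun r z hz => ?_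
  have hrz : (r, z) ∈ closure D :=
    MapsTo.closure (f := fun t => (r, t)) (fun _ ht => ht) (by fun_prop) hz
  have hr : 0 < r := hD.fst_pos hrz
  rw [integral_const_mul]
  calc |r * (ω (r, z) * excess u k (r, z) ^ 2)|
      = |ω (r, z)| * (r * excess u k (r, z) ^ 2) := by
        rw [abs_mul, abs_mul, abs_of_pos hr, abs_of_nonneg (sq_nonneg (excess u k (r, z)))]
        ring
    _ ≤ W * ∫ t in column D r, columnDensity u k (r, t) :=
      mul_le_mul (hω _ hrz) (h.mul_excess_sq_le_setIntegral_column hD hr.le hz) (by positivity)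
        ((abs_nonneg _).trans (hω _ hrz))

lemma energyDensity_add_columnDensity_le {p : ℝ × ℝ} (hp : 0 < p.1) (hω : |ω p| ≤ W)
    (hk : 4 * W ≤ k) :
    energyDensity u W k p + 2 * W * columnDensity u k p ≤
      (u p * excess u k p ^ 2 * p.1⁻¹
        + 2 * (p.1 * excess u k p * (pdr u p ^ 2 + pdz u p ^ 2))
        - 2 * (p.1 * excess u k p * (ω p * pdz u p))) + 9 * W ^ 2 * (p.1 * excess u k p) := by
  have weight_nonneg : 0 ≤ p.1 * excess u k p := mul_nonneg hp.le (excess_nonneg u k p)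
  have level : 4 * W * excess u k p ^ 2 * p.1⁻¹ ≤ u p * excess u k p ^ 2 * p.1⁻¹ := by
    gcongr ?_ * _
    exact (mul_le_mul_of_nonneg_right hk (sq_nonneg _)).trans (mul_excess_sq_le u k p)
  have source : p.1 * excess u k p * (ω p * pdz u p) ≤ p.1 * excess u k p * (W * |pdz u p|) := by
    refine mul_le_mul_of_nonneg_left ((le_abs_self _).trans ?_) weight_nonneg
    rw [abs_mul]
    gcongr
  have young : 0 ≤ p.1 * excess u k p * ((3 * W - |pdz u p|) ^ 2 + pdr u p ^ 2) := by positivity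
  rw [energyDensity, columnDensity_eq u k hp]
  linear_combination young + level + 2 * source + p.1 * excess u k p * sq_abs (pdz u p)

lemma setIntegral_energyDensity_le (hD : IsMeridianDomain D H V) (h : IsSolution D H V u ω)
    (hω : ∀ p ∈ closure D, |ω p| ≤ W) (hW : 0 ≤ W) (hk : 4 * W ≤ k) :
    ∫ p in D, energyDensity u W k p ≤ 9 * W ^ 2 * excessMass D u k := by
  have hv := h.continuousOn_excess k
  have hu := h.hasContLineDerivOn_pdr.continuousOn
  have hr := h.hasContLineDerivOn_pdr.continuousOn_deriv
  have hz := h.hasContLineDerivOn_pdz.continuousOn_deriv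
  have hcω := h.hasContLineDerivOn_source.continuousOn
  have hinv := hD.continuousOn_inv_fst
  have energy_int := hD.integrableOn (h.continuousOn_energyDensity hD W k)
  have column_int := (hD.integrableOn (h.continuousOn_columnDensity hD k)).const_mul (2 * W)
  have identity_int : IntegrableOn (fun p => u p * excess u k p ^ 2 * p.1⁻¹
        + 2 * (p.1 * excess u k p * (pdr u p ^ 2 + pdz u p ^ 2))
        - 2 * (p.1 * excess u k p * (ω p * pdz u p))) D := hD.integrableOn (by fun_prop)
  have mass_int : IntegrableOn (fun p => 9 * W ^ 2 * (p.1 * excess u k p)) D :=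
    hD.integrableOn (by fun_prop)
  have := setIntegral_mono_on (energy_int.add column_int) (identity_int.add mass_int)
    hD.measurableSet fun p hp => energyDensity_add_columnDensity_le
      (hD.fst_pos (subset_closure hp)) (hω p (subset_closure hp)) hk
  rw [integral_add' energy_int column_int, integral_add' identity_int mass_int,
    integral_const_mul, integral_const_mul, h.energy_identity hD (by linarith)] at this
  have := neg_le_of_abs_le (h.abs_setIntegral_source_le hD hω k)
  rw [excessMass]
  linarith

lemma setIntegral_le_mul_excessMass (hD : IsMeridianDomain D H V) (h : IsSolution D H V u ω)
    (hω : ∀ p ∈ closure D, |ω p| ≤ W) (hW : 0 ≤ W) (hk : 4 * W ≤ k) {f : ℝ × ℝ → ℝ} {a b : ℝ}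
    (hb : 0 ≤ b) (hf : ContinuousOn f (closure D))
    (hfab : ∀ p ∈ D, f p ≤ a * (p.1 * excess u k p) + b * energyDensity u W k p) :
    ∫ p in D, f p ≤ (a + 9 * W ^ 2 * b) * excessMass D u k := by
  have hv := h.continuousOn_excess k
  have mass_int : IntegrableOn (fun p => a * (p.1 * excess u k p)) D :=
    hD.integrableOn (by fun_prop)
  have energy_int := (hD.integrableOn (h.continuousOn_energyDensity hD W k)).const_mul b
  have := setIntegral_mono_on (hD.integrableOn hf) (mass_int.add energy_int) hD.measurableSet hfab
  rw [integral_add' mass_int energy_int, integral_const_mul, integral_const_mul] at this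
  have := mul_le_mul_of_nonneg_left (h.setIntegral_energyDensity_le hD hω hW hk) hb
  rw [excessMass] at *
  linarith

lemma setIntegral_rowDensity_le (hD : IsMeridianDomain D H V) (h : IsSolution D H V u ω)
    (hω : ∀ p ∈ closure D, |ω p| ≤ W) (hW : 0 < W) (hk : 4 * W ≤ k) :
    ∫ p in D, rowDensity u k p ≤ 6 * W * excessMass D u k := by
  refine le_of_mul_le_mul_left ?_ (by positivity : 0 < 3 * W)
  rw [← integral_const_mul]
  refine (h.setIntegral_le_mul_excessMass hD hω hW.le hk (a := 9 * W ^ 2) (b := 1) zero_le_one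
    ((h.continuousOn_rowDensity k).const_mul _) fun p hp => ?_).trans_eq (by ring)
  have hp0 : 0 < p.1 := hD.fst_pos (subset_closure hp)
  have young : 0 ≤ p.1 * excess u k p * ((3 * W - |pdr u p|) ^ 2 + pdz u p ^ 2) :=
    mul_nonneg (mul_nonneg hp0.le (excess_nonneg u k p)) (by positivity)
  have : 0 ≤ 2 * W * (excess u k p ^ 2 * p.1⁻¹) := by positivity
  rw [rowDensity_eq, energyDensity]
  linear_combination young + this + p.1 * excess u k p * sq_abs (pdr u p)

lemma setIntegral_columnDensity_le (hD : IsMeridianDomain D H V) (h : IsSolution D H V u ω)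
    (hω : ∀ p ∈ closure D, |ω p| ≤ W) (hW : 0 < W) (hk : 4 * W ≤ k) :
    ∫ p in D, columnDensity u k p ≤ 9 * W * excessMass D u k := by
  refine le_of_mul_le_mul_left ?_ (by positivity : 0 < 3 * W)
  rw [← integral_const_mul]
  refine (h.setIntegral_le_mul_excessMass hD hω hW.le hk (a := 9 * W ^ 2) (b := 2) zero_le_two
    ((h.continuousOn_columnDensity hD k).const_mul _) fun p hp => ?_).trans_eq (by ring)
  have hp0 : 0 < p.1 := hD.fst_pos (subset_closure hp)
  have young : 0 ≤ p.1 * excess u k p *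
      ((3 * W - |pdz u p|) ^ 2 + 2 * pdr u p ^ 2 + pdz u p ^ 2) :=
    mul_nonneg (mul_nonneg hp0.le (excess_nonneg u k p)) (by positivity)
  have : 0 ≤ W * (excess u k p ^ 2 * p.1⁻¹) := by positivity
  rw [columnDensity_eq u k hp0, energyDensity]
  linear_combination young + this + p.1 * excess u k p * sq_abs (pdz u p)

lemma setIntegral_excess_sq_le (hD : IsMeridianDomain D H V) (h : IsSolution D H V u ω)
    (hω : ∀ p ∈ closure D, |ω p| ≤ W) (hW : 0 < W) (hk : 4 * W ≤ k) :
    ∫ p in D, excess u k p ^ 2 ≤ 9 / 2 * W * excessMass D u k := by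
  have hv := h.continuousOn_excess k
  refine le_of_mul_le_mul_left ?_ (by positivity : 0 < 2 * W)
  rw [← integral_const_mul]
  refine (h.setIntegral_le_mul_excessMass hD hω hW.le hk (a := 0) (b := 1) zero_le_one
    (by fun_prop) fun p hp => ?_).trans_eq (by ring)
  obtain ⟨hp0, hp1⟩ := hD.fst_mem_Ioc p (subset_closure hp)
  have gradient_nonneg : 0 ≤ p.1 * excess u k p * (pdr u p ^ 2 + pdz u p ^ 2) :=
    mul_nonneg (mul_nonneg hp0.le (excess_nonneg u k p)) (by positivity)
  have : 2 * W * excess u k p ^ 2 ≤ 2 * W * (excess u k p ^ 2 * p.1⁻¹) := by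
    gcongr
    exact le_mul_of_one_le_right (sq_nonneg _) ((one_le_inv₀ hp0).2 hp1)
  rw [energyDensity]
  linarith

lemma setIntegral_mul_excess_sq_sq_le (hD : IsMeridianDomain D H V) (h : IsSolution D H V u ω)
    (hω : ∀ p ∈ closure D, |ω p| ≤ W) (hW : 0 < W) (hk : 4 * W ≤ k) :
    ∫ p in D, (p.1 * excess u k p ^ 2) ^ 2 ≤ 54 * W ^ 2 * excessMass D u k ^ 2 := by
  have fst_nonneg : ∀ p ∈ D, 0 ≤ p.1 := fun p hp => (hD.fst_pos (subset_closure hp)).le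
  calc ∫ p in D, (p.1 * excess u k p ^ 2) ^ 2
      ≤ (∫ p in D, rowDensity u k p) * ∫ p in D, columnDensity u k p :=
        setIntegral_sq_le_mul_of_section_bounds hD.measurableSet
          (hD.integrableOn (h.continuousOn_rowDensity k))
          (hD.integrableOn (h.continuousOn_columnDensity hD k))
          (fun p hp => mul_nonneg (fst_nonneg p hp) (sq_nonneg _))
          (fun p hp => rowDensity_nonneg u k (fst_nonneg p hp))
          (fun p hp => columnDensity_nonneg u k (fst_nonneg p hp))
          (fun p hp => h.mul_excess_sq_le_setIntegral_row hD (by linarith) hp)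
          (fun p hp => h.mul_excess_sq_le_setIntegral_column hD (fst_nonneg p hp)
            (subset_closure hp))
    _ ≤ 6 * W * excessMass D u k * (9 * W * excessMass D u k) :=
        mul_le_mul (h.setIntegral_rowDensity_le hD hω hW hk)
          (h.setIntegral_columnDensity_le hD hω hW hk)
          (setIntegral_nonneg hD.measurableSet fun p hp =>
            columnDensity_nonneg u k (fst_nonneg p hp))
          (mul_nonneg (by positivity) (hD.excessMass_nonneg u k))
    _ = 54 * W ^ 2 * excessMass D u k ^ 2 := by ring

lemma excessMass_recursion (hD : IsMeridianDomain D H V) (h : IsSolution D H V u ω)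
    (hω : ∀ p ∈ closure D, |ω p| ≤ W) (hW : 0 < W) (hk : 4 * W ≤ k) {d : ℝ} (hd : 0 ≤ d) :
    d ^ 4 * excessMass D u (k + d) ^ 2 ≤ 243 * W ^ 3 * excessMass D u k ^ 3 := by
  have hv := h.continuousOn_excess k
  have hvd := h.continuousOn_excess (k + d)
  have chebyshev : d ^ 2 * excessMass D u (k + d) ≤
      ∫ p in D, p.1 * excess u k p ^ 2 * excess u k p := by
    rw [excessMass, ← integral_const_mul]
    refine setIntegral_mono_on (hD.integrableOn (by fun_prop)) (hD.integrableOn (by fun_prop))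
      hD.measurableSet fun p hp => ?_
    have := mul_le_mul_of_nonneg_left (sq_mul_excess_add_le u k hd p)
      (hD.fst_pos (subset_closure hp)).le
    linarith
  calc d ^ 4 * excessMass D u (k + d) ^ 2 = (d ^ 2 * excessMass D u (k + d)) ^ 2 := by ring
    _ ≤ (∫ p in D, p.1 * excess u k p ^ 2 * excess u k p) ^ 2 :=
        pow_le_pow_left₀ (mul_nonneg (sq_nonneg d) (hD.excessMass_nonneg u _)) chebyshev 2
    _ ≤ (∫ p in D, (p.1 * excess u k p ^ 2) ^ 2) * ∫ p in D, excess u k p ^ 2 :=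
        sq_integral_mul_le (hD.integrableOn (by fun_prop)) (hD.integrableOn (by fun_prop))
          (hD.integrableOn (by fun_prop))
    _ ≤ 54 * W ^ 2 * excessMass D u k ^ 2 * (9 / 2 * W * excessMass D u k) :=
        mul_le_mul (h.setIntegral_mul_excess_sq_sq_le hD hω hW hk)
          (h.setIntegral_excess_sq_le hD hω hW hk)
          (integral_nonneg fun _ => sq_nonneg _) (by positivity)
    _ = 243 * W ^ 3 * excessMass D u k ^ 3 := by ring

lemma excessMass_antitone (hD : IsMeridianDomain D H V) (h : IsSolution D H V u ω) :
    Antitone (excessMass D u) := fun k l hkl =>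
  have hk := h.continuousOn_excess k
  have hl := h.continuousOn_excess l
  setIntegral_mono_on (hD.integrableOn (by fun_prop)) (hD.integrableOn (by fun_prop))
    hD.measurableSet fun p hp =>
      mul_le_mul_of_nonneg_left (excess_anti u p hkl) (hD.fst_pos (subset_closure hp)).le

lemma le_of_excessMass_eq_zero (hD : IsMeridianDomain D H V) (h : IsSolution D H V u ω)
    (hk : excessMass D u k = 0) {p : ℝ × ℝ} (hp : p ∈ D) : u p ≤ k := by
  have hv := h.continuousOn_excess k
  have weighted_continuousOn : ContinuousOn (fun q => q.1 * excess u k q) (closure D) := by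
    fun_prop
  have weighted_ae : (fun q => q.1 * excess u k q) =ᵐ[volume.restrict D] 0 :=
    (setIntegral_eq_zero_iff_of_nonneg_ae
      ((ae_restrict_iff' hD.measurableSet).2 <| .of_forall fun q hq =>
        mul_nonneg (hD.fst_pos (subset_closure hq)).le (excess_nonneg u k q))
      (hD.integrableOn weighted_continuousOn)).1 hk
  have weighted_eq := Measure.eqOn_of_ae_eq weighted_ae
    (weighted_continuousOn.mono subset_closure) continuousOn_const hD.subset_closure_interior hp
  exact le_of_excess_eq_zero
    ((mul_eq_zero.1 weighted_eq).resolve_left (hD.fst_pos (subset_closure hp)).ne')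

lemma le_of_abs_source_le (hD : IsMeridianDomain D H V) (h : IsSolution D H V u ω)
    (hω : ∀ p ∈ closure D, |ω p| ≤ W) (hW : 0 < W) {p : ℝ × ℝ} (hp : p ∈ D) :
    u p ≤ 4 * W + 32 * (W ^ 3 * excessMass D u (4 * W)) ^ (1 / 4 : ℝ) := by
  have hmass := hD.excessMass_nonneg u (4 * W)
  set δ := 16 * (W ^ 3 * excessMass D u (4 * W)) ^ (1 / 4 : ℝ) with hδ
  have δ_pow : δ ^ 4 = 65536 * (W ^ 3 * excessMass D u (4 * W)) := by
    rw [hδ, mul_pow, ← Real.rpow_mul_natCast (by positivity)]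
    norm_num
  have := h.le_of_excessMass_eq_zero hD (eq_zero_of_deGiorgi_recursion (A := 243 * W ^ 3)
    (δ := δ) (by positivity) (by positivity) (hD.excessMass_nonneg u) (h.excessMass_antitone hD)
    (fun k d hk hd => h.excessMass_recursion hD hω hW hk hd.le)
    (by rw [δ_pow]; nlinarith [mul_nonneg (pow_nonneg hW.le 3) hmass])) hp
  linarith

lemma excessMass_le_setIntegral_abs (hD : IsMeridianDomain D H V) (h : IsSolution D H V u ω)
    (hk : 0 ≤ k) : excessMass D u k ≤ ∫ p in D, p.1 * |u p| := by
  have hu := h.hasContLineDerivOn_pdr.continuousOn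
  have hv := h.continuousOn_excess k
  refine setIntegral_mono_on (hD.integrableOn (by fun_prop))
    (hD.integrableOn (continuousOn_fst.mul hu.abs)) hD.measurableSet fun p hp => ?_
  exact mul_le_mul_of_nonneg_left ((excess_anti u p hk).trans (excess_zero_le_abs u p))
    (hD.fst_pos (subset_closure hp)).le

lemma abs_le_of_abs_source_le (hD : IsMeridianDomain D H V) (h : IsSolution D H V u ω)
    (hω : ∀ p ∈ closure D, |ω p| ≤ W) (hW : 0 < W) {p : ℝ × ℝ} (hp : p ∈ D) :
    |u p| ≤ 4 * W + 32 * (W ^ 3 * ∫ q in D, q.1 * |u q|) ^ (1 / 4 : ℝ) := by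
  have one_sided : ∀ {w ϖ : ℝ × ℝ → ℝ}, IsSolution D H V w ϖ → (∀ q ∈ closure D, |ϖ q| ≤ W) →
      w p ≤ 4 * W + 32 * (W ^ 3 * ∫ q in D, q.1 * |w q|) ^ (1 / 4 : ℝ) := by
    intro w ϖ hw hϖ
    have := hD.excessMass_nonneg w (4 * W)
    refine (hw.le_of_abs_source_le hD hϖ hW hp).trans ?_
    gcongr
    exact hw.excessMass_le_setIntegral_abs hD (by positivity)
  have lower := one_sided h.neg (by simpa using hω)
  simp only [Pi.neg_apply, abs_neg] at lower
  exact abs_le'.2 ⟨one_sided h hω, lower⟩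

end IsSolution

end Energy

section StaircaseDomain

variable {β : ℝ} {m i j : ℕ} {p : ℝ × ℝ} {r z : ℝ}

lemma rW_pos (j : ℕ) : 0 < rW j := by
  unfold rW
  positivity

lemma rW_zero : rW 0 = 1 := by simp [rW]

lemma rW_one : rW 1 = 1 / 2 := by norm_num [rW, Real.rpow_neg_one]

lemma rW_strictAnti : StrictAnti rW := fun _ _ hij =>
  Real.rpow_lt_rpow_of_exponent_lt one_lt_two (neg_lt_neg (Nat.cast_lt.2 hij))

lemma rW_le_one (j : ℕ) : rW j ≤ 1 :=
  rW_zero ▸ rW_strictAnti.antitone j.zero_le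

lemma le_of_rW_le_of_lt_rW (hj : rW j ≤ r) (hi : r < rW (i - 1)) : i ≤ j := by
  have := rW_strictAnti.lt_iff_gt.1 (hj.trans_lt hi)
  omega

lemma exists_mem_Ico_rW (hj : rW j ≤ r) (hr : r < 1) :
    ∃ i, 1 ≤ i ∧ i ≤ j ∧ r ∈ Ico (rW i) (rW (i - 1)) := by
  classical
  have hex : ∃ i, rW i ≤ r := ⟨j, hj⟩
  have hpos : 1 ≤ Nat.find hex :=
    (Nat.le_find_iff hex 1).2 fun k hk => by simpa [Nat.lt_one_iff.1 hk, rW_zero] using hr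
  exact ⟨Nat.find hex, hpos, Nat.find_min' hex hj, Nat.find_spec hex,
    not_le.1 (Nat.find_min hex (Nat.sub_one_lt_of_lt hpos))⟩

lemma hH_one (β : ℝ) : hH β 1 = 1 := by simp [hH]

lemma hH_antitone (hβ : 0 ≤ β) : Antitone (hH β) := fun _ _ hij => by
  refine Real.rpow_le_rpow_of_exponent_le one_le_two ?_
  rw [neg_mul, neg_mul]
  gcongr

lemma rW_pred_sq_le_hH (hβ : β ≤ 2) (hj : 1 ≤ j) : rW (j - 1) ^ 2 ≤ hH β j := by
  unfold rW hH
  rw [← Real.rpow_mul_natCast zero_le_two, Nat.cast_sub hj]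
  refine Real.rpow_le_rpow_of_exponent_le one_le_two ?_
  have : (1 : ℝ) ≤ j := Nat.one_le_cast.2 hj
  push_cast
  nlinarith

lemma Srect_eq_prod (β : ℝ) (j : ℕ) :
    Srect β j = Ico (rW j) (rW (j - 1)) ×ˢ Ioo 0 (hH β j) := by
  ext
  simp only [Srect, mem_ofPred_eq, mem_prod, mem_Ico, mem_Ioo, and_assoc]

lemma mem_Ddom :
    p ∈ Ddom β m ↔
      ∃ j, 1 ≤ j ∧ j ≤ m ∧ p.1 ∈ Ico (rW j) (rW (j - 1)) ∧ p.2 ∈ Ioo 0 (hH β j) := by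
  simp only [Ddom, mem_iUnion, Finset.mem_Icc, Srect_eq_prod, mem_prod, exists_prop, and_assoc]

lemma Srect_subset_Ddom (hj : 1 ≤ j) (hjm : j ≤ m) : Srect β j ⊆ Ddom β m :=
  subset_biUnion_of_mem (u := Srect β) (Finset.mem_coe.2 (Finset.mem_Icc.2 ⟨hj, hjm⟩))

lemma measurableSet_Srect (β : ℝ) (j : ℕ) : MeasurableSet (Srect β j) := by
  rw [Srect_eq_prod]
  exact measurableSet_Ico.prod measurableSet_Ioo

lemma measurableSet_Ddom (β : ℝ) (m : ℕ) : MeasurableSet (Ddom β m) :=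
  Finset.measurableSet_biUnion _ fun j _ => measurableSet_Srect β j

lemma closure_Ddom_subset (hβ : 0 ≤ β) : closure (Ddom β m) ⊆ Icc (rW m) 1 ×ˢ Icc 0 1 := by
  refine closure_minimal (fun p hp => ?_) (isClosed_Icc.prod isClosed_Icc)
  obtain ⟨j, hj, hjm, hr, hz⟩ := mem_Ddom.1 hp
  exact ⟨⟨(rW_strictAnti.antitone hjm).trans hr.1, hr.2.le.trans (rW_le_one _)⟩,
    hz.1.le, hz.2.le.trans (hH_one β ▸ hH_antitone hβ hj)⟩

lemma isCompact_closure_Ddom (hβ : 0 ≤ β) : IsCompact (closure (Ddom β m)) :=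
  (isCompact_Icc.prod isCompact_Icc).of_isClosed_subset isClosed_closure (closure_Ddom_subset hβ)

lemma Ddom_subset_closure_interior : Ddom β m ⊆ closure (interior (Ddom β m)) := by
  intro p hp
  obtain ⟨j, hj, hjm, hr, hz⟩ := mem_Ddom.1 hp
  have hopen : Ioo (rW j) (rW (j - 1)) ×ˢ Ioo 0 (hH β j) ⊆ interior (Ddom β m) :=
    interior_maximal ((prod_mono Ioo_subset_Ico_self subset_rfl).trans
      (Srect_eq_prod β j ▸ Srect_subset_Ddom hj hjm)) (isOpen_Ioo.prod isOpen_Ioo)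
  refine closure_mono hopen ?_
  rw [closure_prod_eq, closure_Ioo (hr.1.trans_lt hr.2).ne, closure_Ioo (hz.1.trans hz.2).ne]
  exact ⟨Ico_subset_Icc_self hr, Ioo_subset_Icc_self hz⟩

lemma column_Ddom_eq_Ioo (hj : 1 ≤ j) (hjm : j ≤ m) (hr : r ∈ Ico (rW j) (rW (j - 1))) :
    column (Ddom β m) r = Ioo 0 (hH β j) := by
  ext z
  refine mem_Ddom.trans ⟨?_, fun hz => ⟨j, hj, hjm, hr, hz⟩⟩
  rintro ⟨i, -, -, hri, hz⟩
  rwa [(le_of_rW_le_of_lt_rW hr.1 hri.2).antisymm (le_of_rW_le_of_lt_rW hri.1 hr.2)] at hz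

lemma row_Ddom_eq_Ico (hβ : 0 ≤ β) (hjm : j ≤ m) (hz : z ∈ Ioo 0 (hH β j))
    (hmax : ∀ i ≤ m, z < hH β i → i ≤ j) :
    row (Ddom β m) z = Ico (rW j) 1 := by
  ext r
  refine mem_Ddom.trans ⟨?_, fun hr => ?_⟩
  · rintro ⟨i, -, him, hr, hzi⟩
    exact ⟨(rW_strictAnti.antitone (hmax i him hzi.2)).trans hr.1, hr.2.trans_le (rW_le_one _)⟩
  · obtain ⟨i, hi, hij, hri⟩ := exists_mem_Ico_rW hr.1 hr.2
    exact ⟨i, hi, hij.trans hjm, hri, hz.1, hz.2.trans_le (hH_antitone hβ hij)⟩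

lemma exists_maximal_level_of_row_nonempty (hne : (row (Ddom β m) z).Nonempty) :
    ∃ j, 1 ≤ j ∧ j ≤ m ∧ z ∈ Ioo 0 (hH β j) ∧ ∀ i ≤ m, z < hH β i → i ≤ j := by
  classical
  obtain ⟨r, hr⟩ := hne
  obtain ⟨i, hi, him, -, hz⟩ := mem_Ddom.1 hr
  exact ⟨Nat.findGreatest (z < hH β ·) m, hi.trans (Nat.le_findGreatest him hz.2),
    Nat.findGreatest_le m, ⟨hz.1, Nat.findGreatest_spec (P := (z < hH β ·)) him hz.2⟩,
    fun k hk hzk => Nat.le_findGreatest hk hzk⟩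

lemma left_endpoint_row_mem_bdV (hj : 1 ≤ j) (hjm : j ≤ m) (hz : z ∈ Ioo 0 (hH β j))
    (hmax : ∀ i ≤ m, z < hH β i → i ≤ j) : (rW j, z) ∈ bdV β m := by
  rcases hjm.eq_or_lt with rfl | hlt
  · exact .inl (.inr ⟨rfl, hz.1.le, hz.2.le⟩)
  · have hstep : hH β (j + 1) ≤ z := not_lt.1 fun h => (hmax (j + 1) hlt h).not_gt j.lt_succ_self
    exact .inr (mem_biUnion (Finset.mem_Icc.2 ⟨hj, Nat.le_sub_one_of_lt hlt⟩)
      ⟨rfl, hstep, hz.2.le⟩)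

lemma exists_row_Ddom (hβ : 0 ≤ β) (hne : (row (Ddom β m) z).Nonempty) :
    ∃ a b, row (Ddom β m) z = Ico a b ∧ (a, z) ∈ bdV β m ∧ (b, z) ∈ bdV β m := by
  obtain ⟨j, hj, hjm, hz, hmax⟩ := exists_maximal_level_of_row_nonempty hne
  exact ⟨rW j, 1, row_Ddom_eq_Ico hβ hjm hz hmax, left_endpoint_row_mem_bdV hj hjm hz hmax,
    .inl (.inl ⟨rfl, hz.1.le, hz.2.le.trans (hH_one β ▸ hH_antitone hβ hj)⟩)⟩

lemma exists_column_Ddom (hβ : β ≤ 2) (hne : (column (Ddom β m) r).Nonempty) :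
    ∃ a b, r ^ 2 ≤ b - a ∧ column (Ddom β m) r = Ioo a b ∧
      (r, a) ∈ bdH β m ∧ (r, b) ∈ bdH β m := by
  obtain ⟨z, hz⟩ := hne
  obtain ⟨j, hj, hjm, hr, -⟩ := mem_Ddom.1 hz
  have hr0 : 0 ≤ r := (rW_pos j).le.trans hr.1
  refine ⟨0, hH β j, ?_, column_Ddom_eq_Ioo hj hjm hr, ?_, ?_⟩
  · rw [sub_zero]
    exact (pow_le_pow_left₀ hr0 hr.2.le 2).trans (rW_pred_sq_le_hH hβ hj)
  · exact .inl ⟨rfl, (rW_strictAnti.antitone hjm).trans hr.1, hr.2.le.trans (rW_le_one _)⟩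
  · exact .inr (mem_biUnion (Finset.mem_Icc.2 ⟨hj, hjm⟩) ⟨rfl, hr.1, hr.2.le⟩)

lemma isMeridianDomain_Ddom (hβ : 0 ≤ β) (hβ' : β ≤ 2) (m : ℕ) :
    IsMeridianDomain (Ddom β m) (bdH β m) (bdV β m) where
  measurableSet := measurableSet_Ddom β m
  isCompact_closure := isCompact_closure_Ddom hβ
  fst_mem_Ioc _ hp :=
    have hr := (closure_Ddom_subset hβ hp).1
    ⟨(rW_pos m).trans_le hr.1, hr.2⟩
  subset_closure_interior := Ddom_subset_closure_interior
  exists_row _ := exists_row_Ddom hβ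
  exists_column _ := exists_column_Ddom hβ'

lemma integrableOn_Ddom {f : ℝ × ℝ → ℝ} (hβ : 0 ≤ β) (hf : ContinuousOn f (closure (Ddom β m))) :
    IntegrableOn f (Ddom β m) :=
  (hf.integrableOn_compact (isCompact_closure_Ddom hβ)).mono_set subset_closure

lemma one_le_cylIntegral {f : ℝ × ℝ → ℝ} (hβ : 0 ≤ β) (hm : 1 ≤ m)
    (hcont : ContinuousOn f (closure (Ddom β m))) (hf : ∀ p ∈ Ddom β m, 1 ≤ f p) :
    1 ≤ cylIntegral β m f := by
  have hint : IntegrableOn (fun p => f p * (2 * π * p.1)) (Ddom β m) :=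
    integrableOn_Ddom hβ (by fun_prop)
  have hsub : Srect β 1 ⊆ Ddom β m := Srect_subset_Ddom le_rfl hm
  have volume_Srect : volume (Srect β 1) = ENNReal.ofReal (1 / 2) := by
    rw [Srect_eq_prod, Measure.volume_eq_prod, Measure.prod_prod, Real.volume_Ico,
      Real.volume_Ioo, rW_zero, rW_one, hH_one]
    norm_num
  have integrand_ge : ∀ p ∈ Srect β 1, π ≤ f p * (2 * π * p.1) := fun p hp => by
    have hr : 1 / 2 ≤ p.1 := rW_one ▸ hp.1
    nlinarith [hf p (hsub hp), Real.pi_pos, mul_le_mul_of_nonneg_left hr Real.pi_pos.le]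
  have integrand_nonneg : ∀ p ∈ Ddom β m, 0 ≤ f p * (2 * π * p.1) := fun p hp => by
    obtain ⟨j, -, -, hr, -⟩ := mem_Ddom.1 hp
    have := (rW_pos j).trans_le hr.1
    have := hf p hp
    positivity
  calc (1 : ℝ) ≤ ∫ _ in Srect β 1, π := by
        rw [setIntegral_const, Measure.real, volume_Srect, ENNReal.toReal_ofReal (by norm_num),
          smul_eq_mul]
        linarith [Real.pi_gt_three]
    _ ≤ ∫ p in Srect β 1, f p * (2 * π * p.1) :=
        setIntegral_mono_on (integrableOn_const (by simp [volume_Srect])) (hint.mono_set hsub)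
          (measurableSet_Srect β 1) integrand_ge
    _ ≤ cylIntegral β m f :=
        setIntegral_mono_set hint ((ae_restrict_iff' (measurableSet_Ddom β m)).2
          (.of_forall integrand_nonneg)) (.of_forall hsub)

lemma setIntegral_fst_mul_abs_le_cylIntegral {u : ℝ × ℝ → ℝ} (hβ : 0 ≤ β)
    (hu : ContinuousOn u (closure (Ddom β m))) :
    ∫ p in Ddom β m, p.1 * |u p| ≤ cylIntegral β m fun p => (|u p| + 1) ^ 2 := by
  refine setIntegral_mono_on (integrableOn_Ddom hβ (by fun_prop))
    (integrableOn_Ddom hβ (by fun_prop)) (measurableSet_Ddom β m) fun p hp => ?_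
  have hr : 0 ≤ p.1 := (rW_pos m).le.trans (closure_Ddom_subset hβ (subset_closure hp)).1.1
  calc p.1 * |u p| ≤ p.1 * (|u p| + 1) ^ 2 := by
        gcongr
        nlinarith [abs_nonneg (u p)]
    _ ≤ p.1 * (|u p| + 1) ^ 2 * (2 * π) :=
        le_mul_of_one_le_right (by positivity) (by linarith [Real.pi_gt_three])
    _ = (|u p| + 1) ^ 2 * (2 * π * p.1) := by ring

end StaircaseDomain

lemma four_mul_add_rpow_le {W I J s t : ℝ} (hW : 1 ≤ W) (hI : 1 ≤ I) (hJ : 0 ≤ J) (hJI : J ≤ I)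
    (hs : 1 ≤ s) (ht : 1 / 4 ≤ t) :
    4 * W + 32 * (W ^ 3 * J) ^ (1 / 4 : ℝ) ≤ 36 * W ^ s * I ^ t := by
  have W_le : W ≤ W ^ s := Real.self_le_rpow_of_one_le hW hs
  have one_le : 1 ≤ I ^ t := Real.one_le_rpow hI (by linarith)
  have root_le : (W ^ 3 * J) ^ (1 / 4 : ℝ) ≤ W * I ^ t := by
    calc (W ^ 3 * J) ^ (1 / 4 : ℝ) ≤ (W ^ 4 * I) ^ (1 / 4 : ℝ) := by
          gcongr
          norm_num
      _ = W * I ^ (1 / 4 : ℝ) := by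
          rw [Real.mul_rpow (by positivity) (by positivity),
            ← Real.rpow_natCast_mul (by positivity)]
          norm_num
      _ ≤ W * I ^ t := by
          gcongr
  calc 4 * W + 32 * (W ^ 3 * J) ^ (1 / 4 : ℝ) ≤ 4 * (W * I ^ t) + 32 * (W * I ^ t) := by
        gcongr
        exact le_mul_of_one_le_right (by linarith) one_le
    _ = 36 * W * I ^ t := by ring
    _ ≤ 36 * W ^ s * I ^ t := by gcongr

theorem moser_bound_vr_general {β : ℝ} (hβ : 0 ≤ β) (hβ' : β ≤ 2) {m : ℕ} {u ω : ℝ × ℝ → ℝ}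
    (h : IsSolution (Ddom β m) (bdH β m) (bdV β m) u ω) {s t : ℝ} (hs : 1 ≤ s) (ht : 1 / 4 ≤ t)
    {p : ℝ × ℝ} (hp : p ∈ Ddom β m) :
    |u p| ≤ 36 * (sSup ((fun q => |ω q|) '' Ddom β m) + 1) ^ s
      * (cylIntegral β m fun q => (|u q| + 1) ^ 2) ^ t := by
  have hD := isMeridianDomain_Ddom hβ hβ' m
  obtain ⟨j, hj, hjm, -⟩ := mem_Ddom.1 hp
  have hu := h.hasContLineDerivOn_pdr.continuousOn
  have hW : 0 ≤ sSup ((fun q => |ω q|) '' Ddom β m) :=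
    Real.sSup_nonneg (forall_mem_image.2 fun q _ => abs_nonneg (ω q))
  have source_le : ∀ q ∈ closure (Ddom β m), |ω q| ≤ sSup ((fun q => |ω q|) '' Ddom β m) + 1 :=
    fun q hq => (le_sSup_image_of_mem_closure hD.isCompact_closure
      h.hasContLineDerivOn_source.continuousOn.abs hq).trans (le_add_of_nonneg_right zero_le_one)
  have one_le_integral : 1 ≤ cylIntegral β m fun q => (|u q| + 1) ^ 2 :=
    one_le_cylIntegral hβ (hj.trans hjm) ((hu.abs.add continuousOn_const).pow 2)
      fun q _ => one_le_pow₀ (le_add_of_nonneg_left (abs_nonneg _))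
  have mass_nonneg : 0 ≤ ∫ q in Ddom β m, q.1 * |u q| :=
    setIntegral_nonneg hD.measurableSet fun q hq =>
      mul_nonneg (hD.fst_pos (subset_closure hq)).le (abs_nonneg _)
  exact (h.abs_le_of_abs_source_le hD source_le (by positivity) hp).trans
    (four_mul_add_rpow_le (by linarith) one_le_integral mass_nonneg
      (setIntegral_fst_mul_abs_le_cylIntegral hβ hu) hs ht)

/-- Uniform `L^∞` bound for the solution of
`Δ u - u/r² = ∂_{x₃} ω` with mixed boundary conditions. -/
theorem moser_bound_vr :
    ∃ C : ℝ,
      ∀ (β : ℝ), 1 < β → β ≤ 1.1 → ∀ (m : ℕ), 1 ≤ m →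
      ∀ u ω : ℝ × ℝ → ℝ,
        (∃ U : Set (ℝ × ℝ), IsOpen U ∧ closure (Ddom β m) ⊆ U ∧ ContDiffOn ℝ 2 u U) →
        (∃ U : Set (ℝ × ℝ), IsOpen U ∧ closure (Ddom β m) ⊆ U ∧ ContDiffOn ℝ 1 ω U) →
        (∀ p ∈ Ddom β m, cylLap u p - u p / p.1 ^ 2 = pdz ω p) →
        (∀ p ∈ bdH β m, pdz u p = 0) →
        (∀ p ∈ bdV β m, u p = 0) →
        ∀ p ∈ Ddom β m,
          |u p| ≤ C * (sSup ((fun q => |ω q|) '' Ddom β m) + 1) ^ ((13 : ℝ) / 3)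
            * (cylIntegral β m fun q => (|u q| + 1) ^ 2) ^ ((1 : ℝ) / 2) :=
  ⟨36, fun _ hβ hβ' _ _ _ _ hu hω heq hH hV _ hp => moser_bound_vr_general (by linarith)
    (by linarith) ⟨hu, hω, heq, hH, hV⟩ (by norm_num) (by norm_num) hp⟩
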